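/- Let Λ = ℤ_p[[T₁,…,T_d]] and M a finitely generated torsion Λ-module. Then M is pseudo-null if and only if Ext^1_Λ(M, Λ) = 0. -/

import Mathlib

open CategoryTheory

/-- `extModule R M N n` is the `n`-th Ext group `Ext^n_R(M, N)` in the category of
`R`-modules. -/
noncomputable def extModule (R : Type) [CommRing R] (M N : Type) [AddCommGroup M] [Module R M]
    [AddCommGroup N] [Module R N] (n : ℕ) : ModuleCat R :=
  ((Ext R (ModuleCat R) n).obj (Opposite.op (ModuleCat.of R M))).obj (ModuleCat.of R N)

/-- A module over a commutative ring is pseudo-null if its localization at every prime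
of height at most one vanishes. -/
def IsPseudoNull (R : Type) [CommRing R] (M : Type) [AddCommGroup M] [Module R M] : Prop :=
  ∀ (P : Ideal R) (hP : P.IsPrime), Order.height (⟨P, hP⟩ : PrimeSpectrum R) ≤ 1 →
    Subsingleton (LocalizedModule P.primeCompl M)

/-!
Let `f ≠ 0` annihilate `M`. Multiplication by `f` is zero on `Ext(M, R)` and `Hom(M, R) = 0`, so
the long exact sequence of `0 → R → R → R/f → 0` identifies `Ext¹(M, R)` with `Hom(M, R/f)`. This
group vanishes exactly when no prime of `Supp M` is associated to `R/f`, and over a Noetherian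
integrally closed domain the associated primes of `R/f` are the primes of height at most one
containing `f`.

A power series ring over a Noetherian integrally closed domain `R` with fraction field `K` is again
integrally closed. The ring `K⟦X⟧` is factorial, so a fraction that is integral over `R⟦X⟧` is a
power series over `K`, and it is almost integral over `R⟦X⟧`. Comparing leading coefficients shows
that its coefficients are almost integral over `R`, hence lie in `R`.
-/

open scoped PowerSeries nonZeroDivisors

section PowerSeriesCoefficients

variable {R S : Type*} [CommRing R] [IsDomain R] [CommRing S] [Algebra R S]

lemma isAlmostIntegral_constantCoeff_of_X_pow_mul {k : ℕ} {q : S⟦X⟧}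
    (hq : IsAlmostIntegral R⟦X⟧ (PowerSeries.X ^ k * q)) :
    IsAlmostIntegral R (PowerSeries.constantCoeff q) := by
  obtain ⟨d, hd, hdq⟩ := hq
  set a := d.order.toNat
  set e := d.divXPowOrder
  have hde : d = PowerSeries.X ^ a * e := PowerSeries.X_pow_order_mul_divXPowOrder.symm
  have he : PowerSeries.constantCoeff e ≠ 0 :=
    PowerSeries.constantCoeff_divXPowOrder_eq_zero_iff.not.mpr (nonZeroDivisors.ne_zero hd)
  refine ⟨PowerSeries.constantCoeff e, mem_nonZeroDivisors_of_ne_zero he, fun n ↦ ?_⟩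
  obtain ⟨b, hb⟩ := hdq n
  have hfactor : PowerSeries.map (algebraMap R S) b =
      PowerSeries.X ^ (a + k * n) * (PowerSeries.map (algebraMap R S) e * q ^ n) := by
    rw [← PowerSeries.algebraMap_apply'', hb, Algebra.smul_def, PowerSeries.algebraMap_apply'', hde,
      map_mul, map_pow, PowerSeries.map_X]
    ring
  refine ⟨PowerSeries.coeff (a + k * n) b, ?_⟩
  have hmap : PowerSeries.constantCoeff (PowerSeries.map (algebraMap R S) e) =
      algebraMap R S (PowerSeries.constantCoeff e) := by
    simp only [← PowerSeries.coeff_zero_eq_constantCoeff_apply, PowerSeries.coeff_map]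
  have hcoeff := congrArg (PowerSeries.coeff (a + k * n)) hfactor
  simpa [PowerSeries.coeff_X_pow_mul', Algebra.smul_def, hmap] using hcoeff

lemma isAlmostIntegral_powerSeries_C {c : S} (hc : IsAlmostIntegral R c) :
    IsAlmostIntegral R⟦X⟧ (PowerSeries.C c) := by
  obtain ⟨r, hr, hrc⟩ := hc
  have hCr : PowerSeries.C r ≠ 0 :=
    (map_ne_zero_iff _ PowerSeries.C_injective).mpr (nonZeroDivisors.ne_zero hr)
  refine ⟨PowerSeries.C r, mem_nonZeroDivisors_of_ne_zero hCr, fun n ↦ ?_⟩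
  obtain ⟨s, hs⟩ := hrc n
  exact ⟨PowerSeries.C s, by
    simpa [Algebra.smul_def, PowerSeries.algebraMap_apply''] using congrArg PowerSeries.C hs⟩

/- Allowing a factor `X ^ k` avoids having to cancel `X` when the constant term is removed. -/
lemma isAlmostIntegral_coeff_of_X_pow_mul {k : ℕ} {q : S⟦X⟧}
    (hq : IsAlmostIntegral R⟦X⟧ (PowerSeries.X ^ k * q)) (i : ℕ) :
    IsAlmostIntegral R (PowerSeries.coeff i q) := by
  have h₀ := isAlmostIntegral_constantCoeff_of_X_pow_mul hq
  induction i generalizing k q with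
  | zero => simpa using h₀
  | succ i ih =>
    have hX : IsAlmostIntegral R⟦X⟧ (PowerSeries.X ^ k : S⟦X⟧) := by
      have := (completeIntegralClosure R⟦X⟧ S⟦X⟧).algebraMap_mem (PowerSeries.X ^ k)
      simpa [PowerSeries.algebraMap_apply'', mem_completeIntegralClosure] using this
    have hshift : IsAlmostIntegral R⟦X⟧ (PowerSeries.X ^ (k + 1) *
        PowerSeries.mk fun j ↦ PowerSeries.coeff (j + 1) q) := by
      rw [pow_succ, mul_assoc, ← PowerSeries.sub_const_eq_X_mul_shift, mul_sub]
      exact (completeIntegralClosure R⟦X⟧ S⟦X⟧).sub_mem hq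
        ((completeIntegralClosure R⟦X⟧ S⟦X⟧).mul_mem hX (isAlmostIntegral_powerSeries_C h₀))
    simpa using ih hshift (isAlmostIntegral_constantCoeff_of_X_pow_mul hshift)

lemma isAlmostIntegral_powerSeries_coeff {q : S⟦X⟧} (hq : IsAlmostIntegral R⟦X⟧ q) (i : ℕ) :
    IsAlmostIntegral R (PowerSeries.coeff i q) :=
  isAlmostIntegral_coeff_of_X_pow_mul (k := 0) (by simpa using hq) i

end PowerSeriesCoefficients

section IntegrallyClosed

lemma isIntegrallyClosed_of_isAlmostIntegral_mem_range {A B : Type*} [CommRing A] [IsDomain A]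
    [CommRing B] [IsDomain B] [IsIntegrallyClosed B] [Algebra A B] [FaithfulSMul A B]
    (h : ∀ b : B, IsAlmostIntegral A b → b ∈ (algebraMap A B).range) :
    IsIntegrallyClosed A := by
  let L := FractionRing B
  let : Algebra (FractionRing A) L := FractionRing.liftAlgebra A L
  have hBL : Function.Injective (algebraMap B L) := IsFractionRing.injective B L
  rw [isIntegrallyClosed_iff (FractionRing A)]
  intro x hx
  obtain ⟨b, hb⟩ : ∃ b : B, algebraMap B L b = algebraMap (FractionRing A) L x :=
    (isIntegrallyClosed_iff L).mp ‹_› ((hx.map (IsScalarTower.toAlgHom A _ L)).tower_top)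
  have hbA : IsAlmostIntegral A b := by
    obtain ⟨d, hd, hdx⟩ := hx.isAlmostIntegral
    refine ⟨d, hd, fun n ↦ ?_⟩
    obtain ⟨c, hc⟩ := hdx n
    refine ⟨c, hBL ?_⟩
    simpa [Algebra.smul_def, hb, ← IsScalarTower.algebraMap_apply] using
      congrArg (algebraMap (FractionRing A) L) hc
  obtain ⟨a, rfl⟩ := h b hbA
  refine ⟨a, (algebraMap (FractionRing A) L).injective ?_⟩
  rw [← hb, ← IsScalarTower.algebraMap_apply, ← IsScalarTower.algebraMap_apply]

lemma isIntegrallyClosed_powerSeries {R : Type*} [CommRing R] [IsDomain R] [IsNoetherianRing R]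
    [IsIntegrallyClosed R] : IsIntegrallyClosed R⟦X⟧ := by
  let K := FractionRing R
  have : FaithfulSMul R⟦X⟧ K⟦X⟧ := by
    rw [faithfulSMul_iff_algebraMap_injective]
    exact PowerSeries.map_injective _ (IsFractionRing.injective R K)
  refine isIntegrallyClosed_of_isAlmostIntegral_mem_range (B := K⟦X⟧) fun q hq ↦ ?_
  have hcoeff (i : ℕ) : ∃ r : R, algebraMap R K r = PowerSeries.coeff i q :=
    (isIntegrallyClosed_iff K).mp ‹_› (isAlmostIntegral_powerSeries_coeff hq i).isIntegral
  choose r hr using hcoeff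
  exact ⟨PowerSeries.mk r, by ext i; simp [PowerSeries.algebraMap_apply'', hr]⟩

lemma isIntegrallyClosed_mvPowerSeries {σ R : Type*} [Finite σ] [CommRing R] [IsDomain R]
    [IsNoetherianRing R] [IsIntegrallyClosed R] : IsIntegrallyClosed (MvPowerSeries σ R) := by
  induction σ using Finite.induction_empty_option with
  | of_equiv e h => exact .of_equiv (MvPowerSeries.renameEquiv R e).toRingEquiv
  | h_empty => exact .of_equiv (MvPowerSeries.isEmptyEquiv PEmpty R).symm.toRingEquiv
  | @h_option τ _ _ =>
    have := NoZeroDivisors.to_isDomain (MvPowerSeries τ R)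
    have := isIntegrallyClosed_powerSeries (R := MvPowerSeries τ R)
    exact .of_equiv (MvPowerSeries.optionEquivLeft τ R).symm.toRingEquiv

end IntegrallyClosed

section AssociatedPrimes

variable {R : Type*} [CommRing R]

lemma dvd_of_ideal_fg_of_forall_mul_eq [IsDomain R] [IsIntegrallyClosed R] {f g : R}
    (hf : f ≠ 0) {I : Ideal R} (hI : I ≠ ⊥) (hfg : I.FG)
    (h : ∀ c ∈ I, ∃ s ∈ I, c * g = f * s) : f ∣ g := by
  let N : Submodule R (FractionRing R) := Submodule.map (Algebra.linearMap R (FractionRing R)) I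
  have hfK : algebraMap R (FractionRing R) f ≠ 0 := IsFractionRing.to_map_eq_zero_iff.not.mpr hf
  have hN : N ≠ ⊥ := fun hN ↦ hI <|
    Submodule.map_injective_of_injective (IsFractionRing.injective R (FractionRing R))
      (hN.trans (Submodule.map_bot _).symm)
  have hint : IsIntegral R (algebraMap R (FractionRing R) g / algebraMap R (FractionRing R) f) := by
    refine isIntegral_of_smul_mem_submodule N hN (Submodule.FG.map _ hfg) _ ?_
    rintro _ ⟨c, hc, rfl⟩
    obtain ⟨s, hs, hcs⟩ := h c hc
    refine ⟨s, hs, ?_⟩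
    have hcs' := congrArg (algebraMap R (FractionRing R)) hcs
    simp only [map_mul] at hcs'
    simp only [Algebra.linearMap_apply, smul_eq_mul]
    field_simp
    rw [mul_comm, ← hcs', mul_comm]
  obtain ⟨y, hy⟩ := IsIntegrallyClosed.algebraMap_eq_of_integral hint
  refine ⟨y, IsFractionRing.injective R (FractionRing R) ?_⟩
  rw [map_mul, hy, mul_div_cancel₀ _ hfK]

lemma mem_minimalPrimes_span_singleton_of_mul_eq [IsDomain R] {f g c s : R} (hf : f ≠ 0)
    {P : Ideal R} [P.IsPrime] (hP : ∀ x ∈ P, f ∣ x * g) (hc : c ∈ P) (hs : s ∉ P)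
    (hcs : c * g = f * s) : P ∈ (Ideal.span {c}).minimalPrimes := by
  refine ⟨⟨‹_›, (Ideal.span_singleton_le_iff_mem P).mpr hc⟩, ?_⟩
  rintro Q ⟨hQ, hcQ⟩ hQP x hx
  obtain ⟨t, ht⟩ := hP x hx
  have hxs : x * s = t * c := mul_left_cancel₀ hf <|
    calc f * (x * s) = x * g * c := by linear_combination -x * hcs
      _ = f * (t * c) := by linear_combination c * ht
  have hxsQ : x * s ∈ Q := hxs ▸ Q.mul_mem_left t (hcQ (Ideal.mem_span_singleton_self c))
  exact (hQ.mem_or_mem hxsQ).resolve_right fun hsQ ↦ hs (hQP hsQ)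

variable [IsNoetherianRing R]

lemma height_le_one_of_mem_associatedPrimes_quotient_span_singleton [IsDomain R]
    [IsIntegrallyClosed R] {f : R} (hf : f ≠ 0) {P : Ideal R}
    (hP : P ∈ associatedPrimes R (R ⧸ Ideal.span {f})) : P.height ≤ 1 := by
  obtain ⟨hPprime, x, hx⟩ := isAssociatedPrime_iff.mp (AssociatedPrimes.mem_iff.mp hP)
  obtain ⟨g, rfl⟩ := Ideal.Quotient.mk_surjective x
  have hmem (y : R) : y ∈ P ↔ f ∣ y * g := by
    rw [hx, Submodule.mem_colon_singleton, Submodule.mem_bot, ← Ideal.mem_span_singleton,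
      ← Ideal.Quotient.eq_zero_iff_mem, map_mul]
    rfl
  have hfP : f ∈ P := (hmem f).mpr (dvd_mul_right f g)
  have hfg : ¬ f ∣ g := fun h ↦
    (Ideal.ne_top_iff_one P).mp hPprime.ne_top ((hmem 1).mpr (by simpa using h))
  obtain ⟨c, hc, s, hs, hcs⟩ : ∃ c ∈ P, ∃ s ∉ P, c * g = f * s := by
    by_contra! hcontra
    refine hfg (dvd_of_ideal_fg_of_forall_mul_eq hf (Submodule.ne_bot_iff P |>.mpr ⟨f, hfP, hf⟩)
      (IsNoetherian.noetherian P) fun c hc ↦ ?_)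
    obtain ⟨s, hs⟩ := (hmem c).mp hc
    exact ⟨s, by_contra fun hsP ↦ hcontra c hc s hsP hs, hs⟩
  exact Ideal.height_le_one_of_isPrincipal_of_mem_minimalPrimes (Ideal.span {c}) P
    (mem_minimalPrimes_span_singleton_of_mul_eq hf (fun x ↦ (hmem x).mp) hc hs hcs)

lemma mem_associatedPrimes_quotient_span_singleton_of_height_le_one {f : R}
    (hf : f ∈ R⁰) {P : Ideal R} [P.IsPrime] (hfP : f ∈ P) (hP : P.height ≤ 1) :
    P ∈ associatedPrimes R (R ⧸ Ideal.span {f}) := by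
  apply Module.associatedPrimes.minimalPrimes_annihilator_subset_associatedPrimes
  rw [Ideal.annihilator_quotient]
  exact Ideal.mem_minimalPrimes_of_height_le ((Ideal.span_singleton_le_iff_mem P).mpr hfP)
    (hP.trans (Ideal.one_le_height_span_singleton_of_mem_nonZeroDivisors hf))

lemma mem_associatedPrimes_quotient_span_singleton_iff [IsDomain R] [IsIntegrallyClosed R]
    {f : R} (hf : f ≠ 0) {P : Ideal R} [P.IsPrime] (hfP : f ∈ P) :
    P ∈ associatedPrimes R (R ⧸ Ideal.span {f}) ↔ P.height ≤ 1 :=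
  ⟨height_le_one_of_mem_associatedPrimes_quotient_span_singleton hf,
    mem_associatedPrimes_quotient_span_singleton_of_height_le_one
      (mem_nonZeroDivisors_of_ne_zero hf) hfP⟩

lemma subsingleton_linearMap_iff_forall_mem_support_notMem_associatedPrimes {M N : Type*}
    [AddCommGroup M] [Module R M] [Module.Finite R M]
    [AddCommGroup N] [Module R N] [Module.Finite R N] :
    Subsingleton (M →ₗ[R] N) ↔
      ∀ P ∈ Module.support R M, P.asIdeal ∉ associatedPrimes R N := by
  constructor
  · intro h P hPM hPN
    obtain ⟨r, hrM, hrN⟩ := IsSMulRegular.subsingleton_linearMap_iff.mp h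
    have hrP : r ∈ P.asIdeal := Module.mem_support_iff_of_finite.mp hPM hrM
    have := Set.mem_biUnion hPN hrP
    rw [biUnion_associatedPrimes_eq_compl_regular] at this
    exact this hrN
  · intro h
    refine subsingleton_of_forall_eq 0 fun φ ↦ by_contra fun hφ ↦ ?_
    have : Nontrivial φ.range :=
      Submodule.nontrivial_iff_ne_bot.mpr (LinearMap.range_eq_bot.not.mpr hφ)
    obtain ⟨P, hP⟩ := associatedPrimes.nonempty R φ.range
    have hPM : Module.annihilator R M ≤ P := by
      intro r hr
      refine (AssociatedPrimes.mem_iff.mp hP).annihilator_le ?_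
      rw [Submodule.annihilator_top]
      exact φ.rangeRestrict.annihilator_le_of_surjective φ.surjective_rangeRestrict hr
    exact h ⟨P, hP.isPrime⟩ (Module.mem_support_iff_of_finite.mpr hPM)
      (associatedPrimes.subset_of_injective φ.range.subtype_injective hP)

end AssociatedPrimes

section Ext

open Opposite Abelian
open scoped Pointwise

universe v w

lemma subsingleton_ext_obj_succ_iff {R C : Type*} [CommRing R] [Category* C] [Abelian C]
    [Linear R C] [EnoughProjectives C] [HasExt.{w} C] (X Y : C) (n : ℕ) :
    Subsingleton (((_root_.Ext R C (n + 1)).obj (op X)).obj Y) ↔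
      Subsingleton (Abelian.Ext X Y (n + 1)) := by
  let P := projectiveResolution X
  have hlinear : Subsingleton (((_root_.Ext R C (n + 1)).obj (op X)).obj Y) ↔
      ∀ f : P.complex.X (n + 1) ⟶ Y, P.complex.d (n + 2) (n + 1) ≫ f = 0 →
        ∃ g, P.complex.d (n + 1) n ≫ g = f := by
    rw [← ModuleCat.isZero_iff_subsingleton, (P.isoExt (n + 1) Y).isZero_iff,
      ← HomologicalComplex.exactAt_iff_isZero_homology,
      HomologicalComplex.exactAt_iff' _ n (n + 1) (n + 2) (by simp) (by simp),
      ShortComplex.moduleCat_exact_iff]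
    rfl
  rw [hlinear]
  constructor
  · refine fun h ↦ subsingleton_of_forall_eq 0 fun e ↦ ?_
    obtain ⟨f, hf, rfl⟩ := P.extMk_surjective e (n + 2) rfl
    exact (P.extMk_eq_zero_iff f _ rfl hf n rfl).mpr (h f hf)
  · intro h f hf
    exact (P.extMk_eq_zero_iff f _ rfl hf n rfl).mp (Subsingleton.elim _ _)

lemma subsingleton_ext_X₃_iff_of_comp_mk₀_eq_zero {C : Type*} [Category* C] [Abelian C]
    [HasExt.{w} C] {X : C} {S : ShortComplex C} (hS : S.ShortExact)
    (hf : ∀ (k : ℕ) (x : Abelian.Ext X S.X₁ k), x.comp (Ext.mk₀ S.f) (add_zero k) = 0) (n : ℕ) :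
    Subsingleton (Abelian.Ext X S.X₃ n) ↔
      Subsingleton (Abelian.Ext X S.X₂ n) ∧ Subsingleton (Abelian.Ext X S.X₁ (n + 1)) := by
  constructor
  · intro h
    refine ⟨subsingleton_of_forall_eq 0 fun x ↦ ?_, subsingleton_of_forall_eq 0 fun x ↦ ?_⟩
    · obtain ⟨y, rfl⟩ := Ext.covariant_sequence_exact₂ X hS x (h.elim _ _)
      exact hf n y
    · obtain ⟨y, rfl⟩ := Ext.covariant_sequence_exact₁ X hS x (hf (n + 1) x) rfl
      rw [h.elim y 0, Ext.zero_comp]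
  · rintro ⟨h₀, h₁⟩
    refine subsingleton_of_forall_eq 0 fun x ↦ ?_
    obtain ⟨y, rfl⟩ := Ext.covariant_sequence_exact₃ X hS x rfl (h₁.elim _ _)
    rw [h₀.elim y 0, Ext.zero_comp]

variable {R : Type*} [CommRing R] [Small.{v} R] {M N : ModuleCat.{v} R} {r : R}

lemma ext_comp_mk₀_smul_id_eq_zero (hr : r ∈ Module.annihilator R M) {n : ℕ}
    (x : Abelian.Ext M N n) : x.comp (Ext.mk₀ (r • 𝟙 N)) (add_zero n) = 0 :=
  DFunLike.congr_fun
    (congrArg AddCommGrpCat.Hom.hom (Ext.postcomp_smul_id_eq_zero_of_mem_annihilator hr n)) x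

lemma subsingleton_ext_quotSMulTop_iff (hrM : r ∈ Module.annihilator R M)
    (hrN : IsSMulRegular N r) (n : ℕ) :
    Subsingleton (Abelian.Ext M (ModuleCat.of R (QuotSMulTop r N)) n) ↔
      Subsingleton (Abelian.Ext M N n) ∧ Subsingleton (Abelian.Ext M N (n + 1)) :=
  subsingleton_ext_X₃_iff_of_comp_mk₀_eq_zero hrN.smulShortComplex_shortExact
    (fun _ x ↦ by
      rw [ModuleCat.smulShortComplex_f_eq_smul_id]
      exact ext_comp_mk₀_smul_id_eq_zero hrM x) n

lemma subsingleton_ext_zero_iff_linearMap :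
    Subsingleton (Abelian.Ext M N 0) ↔ Subsingleton (M →ₗ[R] N) :=
  (Ext.addEquiv₀.trans ModuleCat.homAddEquiv).subsingleton_congr

lemma subsingleton_ext_one_iff_linearMap_quotSMulTop (hrM : r ∈ Module.annihilator R M)
    (hrN : IsSMulRegular N r) :
    Subsingleton (Abelian.Ext M N 1) ↔ Subsingleton (M →ₗ[R] QuotSMulTop r N) := by
  have h₀ : Subsingleton (Abelian.Ext M N 0) :=
    subsingleton_ext_zero_iff_linearMap.mpr (hrN.linearMap_subsingleton_of_mem_annihilator hrM)
  have hiff := subsingleton_ext_quotSMulTop_iff hrM hrN 0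
  exact (and_iff_right h₀).symm.trans (hiff.symm.trans subsingleton_ext_zero_iff_linearMap)

end Ext

section PseudoNull

open scoped Pointwise

variable {R M : Type} [CommRing R] [AddCommGroup M] [Module R M]

lemma isPseudoNull_iff_forall_mem_support :
    IsPseudoNull R M ↔ ∀ P ∈ Module.support R M, ¬ P.asIdeal.height ≤ 1 := by
  simp only [IsPseudoNull, PrimeSpectrum.height_eq_orderHeight, Module.mem_support_iff,
    ← not_subsingleton_iff_nontrivial]
  exact ⟨fun h P hPM hP ↦ hPM (h P.asIdeal P.isPrime hP),
    fun h P hPprime hP ↦ by_contra fun hPM ↦ h ⟨P, hPprime⟩ hPM hP⟩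

lemma subsingleton_extModule_one_iff_linearMap_quotient_span_singleton {r : R}
    (hrM : r ∈ Module.annihilator R M) (hr : r ∈ R⁰) :
    Subsingleton (extModule R M R 1) ↔ Subsingleton (M →ₗ[R] R ⧸ Ideal.span {r}) := by
  have hspan : r • (⊤ : Submodule R R) = Ideal.span {r} := by
    rw [← Submodule.ideal_span_singleton_smul, smul_eq_mul, Ideal.mul_top]
  have e : (M →ₗ[R] QuotSMulTop r R) ≃ₗ[R] (M →ₗ[R] R ⧸ Ideal.span {r}) :=
    LinearEquiv.congrRight (Submodule.quotEquivOfEq _ _ hspan)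
  rw [extModule, subsingleton_ext_obj_succ_iff, ← e.toEquiv.subsingleton_congr]
  exact subsingleton_ext_one_iff_linearMap_quotSMulTop hrM
    (Module.Flat.isSMulRegular_of_nonZeroDivisors hr)

theorem stmt_6_general [IsDomain R] [IsNoetherianRing R] [IsIntegrallyClosed R]
    [Module.Finite R M] (htors : Module.IsTorsion R M) :
    IsPseudoNull R M ↔ Subsingleton (extModule R M R 1) := by
  obtain ⟨f, hfM, hf⟩ := Submodule.annihilator_top_inter_nonZeroDivisors htors
  rw [Submodule.annihilator_top] at hfM
  rw [isPseudoNull_iff_forall_mem_support,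
    subsingleton_extModule_one_iff_linearMap_quotient_span_singleton hfM hf,
    subsingleton_linearMap_iff_forall_mem_support_notMem_associatedPrimes]
  refine forall₂_congr fun P hP ↦ not_congr ?_
  have hfP : f ∈ P.asIdeal := Module.mem_support_iff_of_finite.mp hP hfM
  exact (mem_associatedPrimes_quotient_span_singleton_iff (nonZeroDivisors.ne_zero hf) hfP).symm

end PseudoNull

/-- For Λ = ℤ_p[[T₁,…,T_d]] and M a finitely generated torsion Λ-module,
M is pseudo-null if and only if Ext^1_Λ(M,Λ) = 0. -/
theorem stmt_6 (p : ℕ) [Fact p.Prime] (d : ℕ) (hd : 1 ≤ d)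
    (M : Type) [AddCommGroup M] [Module (MvPowerSeries (Fin d) ℤ_[p]) M]
    [Module.Finite (MvPowerSeries (Fin d) ℤ_[p]) M]
    (htors : Module.IsTorsion (MvPowerSeries (Fin d) ℤ_[p]) M) :
    IsPseudoNull (MvPowerSeries (Fin d) ℤ_[p]) M ↔
      Subsingleton
        (extModule (MvPowerSeries (Fin d) ℤ_[p]) M (MvPowerSeries (Fin d) ℤ_[p]) 1) := by
  have : IsDomain (MvPowerSeries (Fin d) ℤ_[p]) := NoZeroDivisors.to_isDomain _
  have : IsIntegrallyClosed (MvPowerSeries (Fin d) ℤ_[p]) := isIntegrallyClosed_mvPowerSeries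
  exact stmt_6_general htors
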